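/- Let n ≥ 1, α > 0, q ∈ (1,∞), q̄(·) ∈ P^emb_q(ℝ^n), and let p : [0,∞) → [1,∞) be measurable with 1 < p⁻ ≤ p⁺ < ∞. Then there exists a constant C > 0, independent of T and u₀, such that for all T > 0 and all u₀ ∈ L^{q̄(·)}(ℝ^n): ‖(t,x) ↦ (𝔤_t^α ∗ u₀)(x)‖_{E_T} ≤ C · max{T^{1/p⁻}, T^{1/p⁺}} · ‖u₀‖_{L^{q̄(·)}(ℝ^n)}. -/

import Mathlib

open MeasureTheory Set
open scoped ENNReal FourierTransform

noncomputable section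

/-- Euclidean space `ℝ^n`. -/
abbrev Rn (n : ℕ) := EuclideanSpace ℝ (Fin n)

/-- Luxemburg norm of an `ℝ≥0∞`-valued function for a variable exponent `p`. -/
def luxNorm {Ω : Type*} [MeasurableSpace Ω] (μ : Measure Ω) (p : Ω → ℝ) (f : Ω → ℝ≥0∞) : ℝ≥0∞ :=
  sInf {lam : ℝ≥0∞ | 0 < lam ∧ ∫⁻ x, (f x / lam) ^ (p x) ∂μ ≤ 1}

/-- Luxemburg norm `‖f‖_{L^{p(·)}}` of a real-valued function. -/
def luxNormR {Ω : Type*} [MeasurableSpace Ω] (μ : Measure Ω) (p : Ω → ℝ) (f : Ω → ℝ) : ℝ≥0∞ :=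
  luxNorm μ p (fun x => ENNReal.ofReal |f x|)

/-- `p(·) ∈ P^log(Ω)`: measurable, with values in `[1,∞)` on `Ω`, locally log-Hölder
continuous on `Ω`, and satisfying the log-Hölder decay condition on `Ω`. -/
def IsPLog {E : Type*} [NormedAddCommGroup E] [MeasurableSpace E] (Ω : Set E) (p : E → ℝ) : Prop :=
  Measurable p ∧ (∀ x ∈ Ω, 1 ≤ p x) ∧
  ∃ C₁ > (0:ℝ), ∃ C₂ > (0:ℝ), ∃ pinf : ℝ,
    (∀ x ∈ Ω, ∀ y ∈ Ω, x ≠ y →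
      |1 / p x - 1 / p y| ≤ C₁ / Real.log (Real.exp 1 + 1 / ‖x - y‖)) ∧
    (∀ x ∈ Ω, |1 / p x - 1 / pinf| ≤ C₂ / Real.log (Real.exp 1 + ‖x‖))

/-- The fractional heat kernel `𝔤_t^α` on `ℝ^n`: the inverse Fourier transform of
`ξ ↦ exp (-t‖ξ‖^{2α})` (it is real-valued; we take the real part). -/
def gKer (n : ℕ) (α t : ℝ) (x : Rn n) : ℝ :=
  (𝓕⁻ (fun ξ : Rn n => (Real.exp (-t * ‖ξ‖ ^ (2 * α)) : ℂ)) x).re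

/-- Convolution on `ℝ^n`. -/
def conv (n : ℕ) (g f : Rn n → ℝ) (x : Rn n) : ℝ := ∫ y, g (x - y) * f y

/-- The class `P^emb_q(ℝ^n)` of variable exponents whose Lebesgue space embeds in `L^q`. -/
def IsPembq (n : ℕ) (q : ℝ) (qb : Rn n → ℝ) : Prop :=
  IsPLog univ qb ∧ q ≤ essInf qb volume ∧
  (∃ M : ℝ, ∀ᵐ x ∂(volume : Measure (Rn n)), qb x ≤ M) ∧
  Filter.Tendsto (fun x : Rn n => q * qb x / (qb x - q)) (Filter.cocompact (Rn n)) Filter.atTop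

/-- The Luxemburg-type norm of `E_T = L^{p(·)}([0,T], L^q(ℝ^n))`:
`‖u‖_{E_T} = inf {λ > 0 : ∫_0^T (‖u(t,·)‖_{L^q}/λ)^{p(t)} dt ≤ 1}`. -/
def eNormT (n : ℕ) (p : ℝ → ℝ) (q T : ℝ) (u : ℝ → Rn n → ℝ) : ℝ≥0∞ :=
  sInf {lam : ℝ≥0∞ | 0 < lam ∧
    ∫⁻ t in Ioc (0:ℝ) T, (eLpNorm (u t) (ENNReal.ofReal q) volume / lam) ^ (p t) ≤ 1}


open Polynomial in
theorem exists_bound_aeval_mul_gaussian (P : ℝ[X]) :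
    ∃ C : ℝ, ∀ x : ℝ, |P.eval x| * Real.exp (-(x ^ 2 / 2)) ≤ C := by
  induction P using Polynomial.induction_on' with
  | add p q hp hq =>
    obtain ⟨C, hC⟩ := hp
    obtain ⟨D, hD⟩ := hq
    refine ⟨C + D, fun x => ?_⟩
    calc |(p + q).eval x| * Real.exp (-(x ^ 2 / 2))
        ≤ (|p.eval x| + |q.eval x|) * Real.exp (-(x ^ 2 / 2)) := by
          rw [eval_add]; gcongr; exact abs_add_le _ _
      _ ≤ C + D := by rw [add_mul]; exact add_le_add (hC x) (hD x)
  | monomial m a =>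
    refine ⟨|a| * (m.factorial * Real.exp (1 / 2)), fun x => ?_⟩
    have h := Real.pow_div_factorial_le_exp |x| (abs_nonneg x) m
    rw [div_le_iff₀ (by positivity)] at h
    rw [eval_monomial, abs_mul, abs_pow, mul_assoc]
    refine mul_le_mul_of_nonneg_left ?_ (abs_nonneg a)
    calc |x| ^ m * Real.exp (-(x ^ 2 / 2))
        ≤ (Real.exp |x| * m.factorial) * Real.exp (-(x ^ 2 / 2)) := by gcongr
      _ = m.factorial * Real.exp (|x| - x ^ 2 / 2) := by rw [sub_eq_add_neg, Real.exp_add]; ring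
      _ ≤ m.factorial * Real.exp (1 / 2) := by
          gcongr
          nlinarith [sq_nonneg (|x| - 1), sq_abs x]

open Polynomial in
/-- The real Gaussian `x ↦ exp (-x² / 2)` as a Schwartz function. -/
def gaussianSchwartz : SchwartzMap ℝ ℝ where
  toFun x := Real.exp (-(x ^ 2 / 2))
  smooth' := by fun_prop
  decay' k n := by
    obtain ⟨C, hC⟩ := exists_bound_aeval_mul_gaussian
      (X ^ k * (hermite n).map (algebraMap ℤ ℝ))
    refine ⟨C, fun x => (le_of_eq ?_).trans (hC x)⟩
    rw [norm_iteratedFDeriv_eq_norm_iteratedDeriv, iteratedDeriv_eq_iterate,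
      deriv_gaussian_eq_hermite_mul_gaussian]
    simp [abs_mul, mul_assoc, aeval_def, eval_map]

theorem exists_schwartz_exp_neg_norm_pow (n M : ℕ) (hM : 1 ≤ M) :
    ∃ f : SchwartzMap (Rn n) ℂ, ∀ x, f x = (Real.exp (-(‖x‖ ^ (4 * M) / 2)) : ℂ) := by
  have hg : (fun x : Rn n => (‖x‖ ^ 2) ^ M).HasTemperateGrowth :=
    (Function.hasTemperateGrowth_norm_sq (Rn n)).pow M
  have hup : ∃ (k : ℕ) (C : ℝ), ∀ x : Rn n, ‖x‖ ≤ C * (1 + ‖(‖x‖ ^ 2) ^ M‖) ^ k := by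
    refine ⟨1, 1, fun x => ?_⟩
    rw [one_mul, pow_one, Real.norm_of_nonneg (by positivity), ← pow_mul]
    rcases le_total ‖x‖ 1 with h | h
    · have : 0 ≤ ‖x‖ ^ (2 * M) := by positivity
      linarith
    · have := le_self_pow₀ h (show 2 * M ≠ 0 by lia)
      linarith
  refine ⟨(SchwartzMap.compCLM ℝ hg hup gaussianSchwartz).postcompCLM Complex.ofRealCLM,
    fun x => ?_⟩
  simp only [SchwartzMap.postcompCLM_apply, SchwartzMap.compCLM_apply, Function.comp_apply]
  change ((Real.exp (-(((‖x‖ ^ 2) ^ M) ^ 2 / 2)) : ℝ) : ℂ) = _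
  congr 4
  rw [← pow_mul, ← pow_mul]
  ring_nf

/-- The Fourier inversion integrals of the dilates of `exp (-‖ξ‖^{4M})` have equal finite
`L¹` norms. -/
theorem exists_fourierInv_exp_neg_norm_pow_le (n M : ℕ) (hM : 1 ≤ M) :
    ∃ K : ℝ≥0∞, K < ⊤ ∧ ∀ s > (0 : ℝ),
      ∫⁻ x, ‖𝓕⁻ (fun ξ : Rn n => (Real.exp (-s * ‖ξ‖ ^ (4 * M)) : ℂ)) x‖ₑ ≤ K := by
  obtain ⟨f, hf⟩ := exists_schwartz_exp_neg_norm_pow n M hM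
  have hint : Integrable (𝓕⁻ (f : Rn n → ℂ)) := by
    rw [← SchwartzMap.fourierInv_coe]
    exact (𝓕⁻ f).integrable
  refine ⟨∫⁻ x, ‖𝓕⁻ (f : Rn n → ℂ) x‖ₑ, hint.2, fun s hs => ?_⟩
  set c : ℝ := (2 * s) ^ (1 / ((4 * M : ℕ) : ℝ)) with hc
  have hc0 : 0 < c := by positivity
  have hcp : c ^ (4 * M) = 2 * s := by
    rw [hc, one_div, Real.rpow_inv_natCast_pow (by positivity) (by lia)]
  have hfun : (fun ξ : Rn n => (Real.exp (-s * ‖ξ‖ ^ (4 * M)) : ℂ)) = fun ξ => f (c • ξ) := by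
    ext ξ
    rw [hf, norm_smul, mul_pow, Real.norm_of_nonneg hc0.le, hcp]
    congr 3
    ring
  set d := Module.finrank ℝ (Rn n)
  have hscale : ∀ x, 𝓕⁻ (fun ξ : Rn n => f (c • ξ)) x
      = |(c ^ d)⁻¹| • 𝓕⁻ (f : Rn n → ℂ) (c⁻¹ • x) := by
    intro x
    rw [Real.fourierInv_eq, Real.fourierInv_eq,
      ← Measure.integral_comp_smul volume
        (fun v => Real.fourierChar (inner ℝ v (c⁻¹ • x)) • f v) c]
    congr 1
    ext v
    rw [inner_smul_left, inner_smul_right]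
    simp [← mul_assoc, mul_inv_cancel₀ hc0.ne']
  have hint2 : Integrable (fun x => 𝓕⁻ (f : Rn n → ℂ) (c⁻¹ • x)) :=
    hint.comp_smul (inv_ne_zero hc0.ne')
  rw [hfun]
  simp_rw [hscale, enorm_smul]
  rw [lintegral_const_mul' _ _ enorm_ne_top, ← ofReal_integral_norm_eq_lintegral_enorm hint2,
    ← ofReal_integral_norm_eq_lintegral_enorm hint,
    Measure.integral_comp_smul volume (fun x => ‖𝓕⁻ (f : Rn n → ℂ) x‖) c⁻¹, smul_eq_mul,
    ← ofReal_norm, ← ENNReal.ofReal_mul (norm_nonneg _), ← mul_assoc]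
  apply le_of_eq
  congr 1
  have : 0 < c ^ d := by positivity
  rw [Real.norm_eq_abs, abs_abs, ← abs_mul, inv_pow, inv_inv, inv_mul_cancel₀ this.ne']
  simp

theorem continuous_exp_neg_mul_norm_rpow (n : ℕ) (s : ℝ) {a : ℝ} (ha : 0 < a) :
    Continuous (fun ξ : Rn n => Real.exp (-s * ‖ξ‖ ^ a)) := by
  have : Continuous (fun ξ : Rn n => ‖ξ‖ ^ a) :=
    continuous_norm.rpow_const (fun _ => Or.inr ha.le)
  fun_prop

theorem integrable_exp_neg_mul_norm_rpow (n : ℕ) {s a : ℝ} (hs : 0 < s) (ha : 0 < a) :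
    Integrable (fun ξ : Rn n => Real.exp (-s * ‖ξ‖ ^ a)) := by
  obtain ⟨k, hk⟩ := exists_nat_ge (((n : ℝ) + 1) / a)
  rw [div_le_iff₀ ha] at hk
  have hdom : Integrable (fun ξ : Rn n => (1 + ‖ξ‖) ^ (-((n : ℝ) + 1))) :=
    integrable_one_add_norm (by simp)
  refine (hdom.const_mul (2 ^ (n + 1) * (1 + k.factorial / s ^ k))).mono'
    (continuous_exp_neg_mul_norm_rpow n s ha).aestronglyMeasurable (.of_forall fun ξ => ?_)
  set r := ‖ξ‖
  have hr : 0 ≤ r := norm_nonneg ξ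
  have hexp : 1 ≤ Real.exp (s * r ^ a) := Real.one_le_exp (by positivity)
  have hpow : r ^ (n + 1) ≤ 1 + k.factorial / s ^ k * Real.exp (s * r ^ a) := by
    rcases le_total r 1 with h | h
    · have : r ^ (n + 1) ≤ 1 := pow_le_one₀ hr h
      have : 0 ≤ k.factorial / s ^ k * Real.exp (s * r ^ a) := by positivity
      linarith
    · have h1 := Real.pow_div_factorial_le_exp (s * r ^ a) (by positivity) k
      rw [div_le_iff₀ (by positivity), mul_pow] at h1
      have h2 : r ^ (n + 1) ≤ (r ^ a) ^ k := by
        rw [← Real.rpow_natCast, ← Real.rpow_natCast (r ^ a), ← Real.rpow_mul hr]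
        apply Real.rpow_le_rpow_of_exponent_le h
        push_cast
        linarith
      have h3 : (r ^ a) ^ k ≤ k.factorial / s ^ k * Real.exp (s * r ^ a) := by
        rw [div_mul_eq_mul_div, le_div_iff₀ (by positivity)]
        linarith
      linarith
  have hadd : (1 + r) ^ (n + 1)
      ≤ 2 ^ (n + 1) * (1 + k.factorial / s ^ k) * Real.exp (s * r ^ a) := by
    have h1 : (1 + r) ^ (n + 1) ≤ 2 ^ (n + 1 - 1) * (1 ^ (n + 1) + r ^ (n + 1)) :=
      add_pow_le zero_le_one hr (n + 1)
    have h2 : (2 : ℝ) ^ (n + 1) = 2 * 2 ^ n := by ring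
    have h3 : (0 : ℝ) < 2 ^ n := by positivity
    rw [one_pow, Nat.add_sub_cancel] at h1
    rw [h2, mul_assoc]
    have h4 : 0 ≤ k.factorial / s ^ k * Real.exp (s * r ^ a) := by positivity
    calc (1 + r) ^ (n + 1) ≤ 2 ^ n * (1 + r ^ (n + 1)) := h1
      _ ≤ 2 ^ n * (2 * ((1 + k.factorial / s ^ k) * Real.exp (s * r ^ a))) := by
        gcongr
        nlinarith
      _ = _ := by ring
  rw [Real.norm_of_nonneg (Real.exp_pos _).le, neg_mul, Real.exp_neg,
    Real.rpow_neg (by positivity), ← div_eq_mul_inv, inv_eq_one_div,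
    div_le_div_iff₀ (by positivity) (by positivity), one_mul]
  have : (1 + r) ^ ((n : ℝ) + 1) = (1 + r) ^ (n + 1) := by
    rw [← Real.rpow_natCast]; push_cast; rfl
  rw [this]
  exact hadd

theorem continuous_fourierInv_of_integrable {n : ℕ} {f : Rn n → ℂ} (hf : Integrable f) :
    Continuous (𝓕⁻ f) := by
  have h : Continuous (𝓕 f) := VectorFourier.fourierIntegral_continuous
    Real.continuous_fourierChar (innerSL ℝ).continuous₂ hf
  have : 𝓕⁻ f = fun x => 𝓕 f (-x) := by
    ext x; exact Real.fourierInv_eq_fourier_neg f x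
  rw [this]
  exact h.comp continuous_neg

/-- Bounds on the `L¹` norm of the inverse Fourier transform pass to dominated limits. -/
theorem lintegral_enorm_fourierInv_le_of_tendsto {n : ℕ} {K : ℝ≥0∞} {m : ℕ → Rn n → ℝ}
    {m₀ b : Rn n → ℝ} (hm : ∀ k, Continuous (m k)) (hb : Integrable b)
    (hmb : ∀ k ξ, |m k ξ| ≤ b ξ)
    (hlim : ∀ᵐ ξ, Filter.Tendsto (fun k => m k ξ) Filter.atTop (nhds (m₀ ξ)))
    (hK : ∀ k, ∫⁻ x, ‖𝓕⁻ (fun ξ => (m k ξ : ℂ)) x‖ₑ ≤ K) :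
    ∫⁻ x, ‖𝓕⁻ (fun ξ => (m₀ ξ : ℂ)) x‖ₑ ≤ K := by
  have hint : ∀ k, Integrable (fun ξ => (m k ξ : ℂ)) := fun k =>
    (hb.mono' (hm k).aestronglyMeasurable (.of_forall (hmb k))).ofReal
  have hpt : ∀ x, Filter.Tendsto (fun k => 𝓕⁻ (fun ξ => (m k ξ : ℂ)) x) Filter.atTop
      (nhds (𝓕⁻ (fun ξ => (m₀ ξ : ℂ)) x)) := by
    intro x
    simp_rw [Real.fourierInv_eq']
    refine tendsto_integral_of_dominated_convergence b (fun k => ?_) hb (fun k => ?_) ?_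
    · have := hm k
      exact Continuous.aestronglyMeasurable (by fun_prop)
    · refine .of_forall fun ξ => ?_
      rw [norm_smul, Complex.norm_exp_ofReal_mul_I, one_mul, Complex.norm_real]
      exact hmb k ξ
    · filter_upwards [hlim] with ξ hξ
      exact ((Complex.continuous_ofReal.tendsto _).comp hξ).const_smul _
  calc ∫⁻ x, ‖𝓕⁻ (fun ξ => (m₀ ξ : ℂ)) x‖ₑ
      = ∫⁻ x, Filter.liminf (fun k => ‖𝓕⁻ (fun ξ => (m k ξ : ℂ)) x‖ₑ) Filter.atTop := by
        congr 1; ext x; exact (hpt x).enorm.liminf_eq.symm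
    _ ≤ Filter.liminf (fun k => ∫⁻ x, ‖𝓕⁻ (fun ξ => (m k ξ : ℂ)) x‖ₑ) Filter.atTop :=
        lintegral_liminf_le fun k =>
          (continuous_fourierInv_of_integrable (hint k)).enorm.measurable
    _ ≤ K := Filter.liminf_le_of_frequently_le' (Filter.Frequently.of_forall hK)

open Polynomial in
theorem lintegral_enorm_fourierInv_polynomial_le {n N : ℕ} (hN : 0 < N) {K : ℝ≥0∞}
    (hK : ∀ s > (0 : ℝ),
      ∫⁻ x, ‖𝓕⁻ (fun ξ : Rn n => (Real.exp (-s * ‖ξ‖ ^ N) : ℂ)) x‖ₑ ≤ K)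
    {P : ℝ[X]} (hP : ∀ j, 0 ≤ P.coeff j) (hP1 : P.eval 1 ≤ 1) {s h : ℝ} (hs : 0 < s)
    (hh : 0 ≤ h) :
    ∫⁻ x, ‖𝓕⁻ (fun ξ : Rn n =>
      ((Real.exp (-s * ‖ξ‖ ^ N) * P.eval (Real.exp (-h * ‖ξ‖ ^ N)) : ℝ) : ℂ)) x‖ₑ ≤ K := by
  set E : ℕ → Rn n → ℂ := fun j ξ => (Real.exp (-(s + j * h) * ‖ξ‖ ^ N) : ℂ) with hE
  have hint : ∀ j, Integrable (E j) := fun j => by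
    have := integrable_exp_neg_mul_norm_rpow n (s := s + j * h) (a := N) (by positivity)
      (by positivity)
    simp only [Real.rpow_natCast] at this
    exact this.ofReal
  have hsum : (fun ξ : Rn n =>
      ((Real.exp (-s * ‖ξ‖ ^ N) * P.eval (Real.exp (-h * ‖ξ‖ ^ N)) : ℝ) : ℂ))
      = fun ξ => ∑ j ∈ Finset.range (P.natDegree + 1), (P.coeff j : ℂ) * E j ξ := by
    ext ξ
    rw [eval_eq_sum_range, Finset.mul_sum, Complex.ofReal_sum]
    refine Finset.sum_congr rfl fun j _ => ?_
    rw [hE, ← Complex.ofReal_mul, ← Real.exp_nat_mul, mul_left_comm, ← Real.exp_add]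
    congr 3
    ring
  have hF : ∀ x, 𝓕⁻ (fun ξ => ∑ j ∈ Finset.range (P.natDegree + 1), (P.coeff j : ℂ) * E j ξ) x
      = ∑ j ∈ Finset.range (P.natDegree + 1), (P.coeff j : ℂ) * 𝓕⁻ (E j) x := by
    intro x
    simp_rw [Real.fourierInv_eq', smul_eq_mul, Finset.mul_sum]
    rw [integral_finsetSum]
    · refine Finset.sum_congr rfl fun j _ => ?_
      rw [← integral_const_mul]
      congr 1
      ext ξ
      ring
    · intro j _
      refine ((hint j).const_mul (P.coeff j : ℂ)).bdd_mul (c := 1) ?_ ?_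
      · exact Continuous.aestronglyMeasurable (by fun_prop)
      · exact .of_forall fun ξ => by rw [Complex.norm_exp_ofReal_mul_I]
  rw [hsum]
  calc ∫⁻ x, ‖𝓕⁻ (fun ξ => ∑ j ∈ Finset.range (P.natDegree + 1), (P.coeff j : ℂ) * E j ξ) x‖ₑ
      ≤ ∫⁻ x, ∑ j ∈ Finset.range (P.natDegree + 1),
          ENNReal.ofReal (P.coeff j) * ‖𝓕⁻ (E j) x‖ₑ := by
        refine lintegral_mono fun x => ?_
        rw [hF]
        refine (enorm_sum_le _ _).trans (Finset.sum_le_sum fun j _ => ?_)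
        rw [enorm_mul, ← ofReal_norm, Complex.norm_real, Real.norm_of_nonneg (hP j)]
    _ = ∑ j ∈ Finset.range (P.natDegree + 1),
          ENNReal.ofReal (P.coeff j) * ∫⁻ x, ‖𝓕⁻ (E j) x‖ₑ := by
        rw [lintegral_finsetSum]
        · refine Finset.sum_congr rfl fun j _ => ?_
          rw [lintegral_const_mul' _ _ ENNReal.ofReal_ne_top]
        · intro j _
          exact (continuous_fourierInv_of_integrable (hint j)).enorm.measurable.const_mul _
    _ ≤ ∑ j ∈ Finset.range (P.natDegree + 1), ENNReal.ofReal (P.coeff j) * K := by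
        gcongr with j
        exact hK _ (by positivity)
    _ = ENNReal.ofReal (P.eval 1) * K := by
        rw [← Finset.sum_mul, ← ENNReal.ofReal_sum_of_nonneg fun j _ => hP j, eval_eq_sum_range]
        simp
    _ ≤ K := by
        have : ENNReal.ofReal (P.eval 1) ≤ 1 := ENNReal.ofReal_le_one.2 hP1
        calc _ ≤ 1 * K := by gcongr
          _ = K := one_mul K

/-- The coefficients of `1 - (1 - z) ^ β` in positive degree are nonnegative for `β ∈ (0, 1]`. -/
theorem neg_one_pow_mul_choose_nonpos {β : ℝ} (hβ0 : 0 ≤ β) (hβ1 : β ≤ 1) (j : ℕ) :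
    (-1) ^ (j + 1) * Ring.choose β (j + 1) ≤ 0 := by
  induction j with
  | zero => simp [hβ0]
  | succ j ih =>
    have hrec : ((j : ℝ) + 2) * Ring.choose β (j + 2) = (β - (j + 1)) * Ring.choose β (j + 1) := by
      have h := Ring.choose_smul_choose β (Nat.le_succ (j + 1))
      rw [Nat.choose_succ_self_right, Nat.succ_sub (le_refl _), Nat.sub_self,
        Ring.choose_one_right, nsmul_eq_mul] at h
      push_cast at h
      linear_combination h
    have : (-1) ^ (j + 2) * Ring.choose β (j + 2)
        = ((-1) ^ (j + 1) * Ring.choose β (j + 1)) * (((j + 1) - β) / (j + 2)) := by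
      have h2 : ((j : ℝ) + 2) ≠ 0 := by positivity
      field_simp
      rw [pow_succ _ (j + 1)]
      linear_combination -(-1) ^ (j + 1) * hrec
    rw [show j + 1 + 1 = j + 2 from rfl, this]
    refine mul_nonpos_of_nonpos_of_nonneg ih (div_nonneg ?_ (by positivity))
    have : (0 : ℝ) ≤ j := by positivity
    linarith

open Polynomial in
/-- `1 - (1 - z) ^ β` is a limit of polynomials with nonnegative coefficients of sum `≤ 1`. -/
theorem exists_polynomial_tendsto_one_sub_rpow {β : ℝ} (hβ0 : 0 < β) (hβ1 : β ≤ 1) :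
    ∃ P : ℕ → ℝ[X], (∀ i j, 0 ≤ (P i).coeff j) ∧ (∀ i, (P i).eval 1 ≤ 1) ∧
      ∀ z ∈ Ico (0 : ℝ) 1,
        Filter.Tendsto (fun i => (P i).eval z) Filter.atTop (nhds (1 - (1 - z) ^ β)) := by
  set a : ℕ → ℝ := fun j => -((-1) ^ (j + 1) * Ring.choose β (j + 1)) with ha
  have ha0 : ∀ j, 0 ≤ a j := fun j => by
    have := neg_one_pow_mul_choose_nonpos hβ0.le hβ1 j
    simp only [ha]; linarith
  have hsum : ∀ z ∈ Ico (0 : ℝ) 1, HasSum (fun j => a j * z ^ (j + 1)) (1 - (1 - z) ^ β) := by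
    intro z hz
    have h := (Real.one_add_rpow_hasFPowerSeriesOnBall_zero (a := β)).hasSum (y := -z)
      (by simp [abs_of_nonneg hz.1, hz.2, enorm_eq_nnnorm, ← NNReal.coe_lt_coe])
    simp only [binomialSeries_apply, List.ofFn_const, List.prod_replicate, smul_eq_mul,
      zero_add] at h
    rw [← hasSum_nat_add_iff' 1] at h
    have h2 := h.neg
    simp only [Finset.sum_range_one, Ring.choose_zero_right, pow_zero, mul_one, neg_sub] at h2
    rw [← sub_eq_add_neg] at h2
    have heq : (fun j => a j * z ^ (j + 1))
        = fun j => -(Ring.choose β (j + 1) * (-z) ^ (j + 1)) := by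
      ext j
      rw [ha, neg_pow z]
      ring
    rw [heq]
    exact h2
  refine ⟨fun i => ∑ j ∈ Finset.range i, C (a j) * X ^ (j + 1), fun i j => ?_, fun i => ?_,
    fun z hz => ?_⟩
  · rw [finsetSum_coeff]
    refine Finset.sum_nonneg fun k _ => ?_
    rw [coeff_C_mul, coeff_X_pow]
    split_ifs <;> simp [ha0]
  · have hcont : Filter.Tendsto
        (fun z => (∑ j ∈ Finset.range i, C (a j) * X ^ (j + 1) : ℝ[X]).eval z)
        (nhdsWithin 1 (Iio 1))
        (nhds ((∑ j ∈ Finset.range i, C (a j) * X ^ (j + 1) : ℝ[X]).eval 1)) :=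
      (Polynomial.continuous _).continuousAt.tendsto.mono_left nhdsWithin_le_nhds
    refine le_of_tendsto hcont ?_
    filter_upwards [Ico_mem_nhdsLT (zero_lt_one' ℝ)] with z hz
    rw [eval_finsetSum]
    simp only [eval_mul, eval_C, eval_pow, eval_X]
    have h1 := sum_le_hasSum (Finset.range i)
      (fun j _ => mul_nonneg (ha0 j) (pow_nonneg hz.1 (j + 1))) (hsum z hz)
    have h2 : 0 ≤ (1 - z) ^ β := Real.rpow_nonneg (by linarith [hz.2]) _
    linarith
  · simpa [eval_finsetSum] using (hsum z hz).tendsto_sum_nat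

theorem tendsto_one_sub_rpow_pow {β t r : ℝ} (hβ0 : 0 < β) (ht : 0 < t) (hr : 0 ≤ r) :
    Filter.Tendsto
      (fun k : ℕ => (1 - (1 - Real.exp (-(t / k) ^ (1 / β) * r)) ^ β) ^ k)
      Filter.atTop (nhds (Real.exp (-t * r ^ β))) := by
  have hder : Filter.Tendsto (fun k : ℕ => (k : ℝ) ^ (1 / β) *
      (1 - Real.exp (-(t / k) ^ (1 / β) * r))) Filter.atTop (nhds (t ^ (1 / β) * r)) := by
    have hd : HasDerivAt (fun x : ℝ => 1 - Real.exp (-x * (t ^ (1 / β) * r)))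
        (t ^ (1 / β) * r) 0 := by
      have := (((hasDerivAt_id (0 : ℝ)).neg.mul_const (t ^ (1 / β) * r)).exp).const_sub 1
      simpa using this
    have hlim := hd.tendsto_slope_zero
    have hx : Filter.Tendsto (fun k : ℕ => ((k : ℝ) ^ (1 / β))⁻¹) Filter.atTop
        (nhdsWithin 0 {0}ᶜ) := by
      refine tendsto_nhdsWithin_iff.2 ⟨?_, ?_⟩
      · exact ((tendsto_rpow_atTop (by positivity)).comp
          tendsto_natCast_atTop_atTop).inv_tendsto_atTop
      · filter_upwards [Filter.eventually_gt_atTop 0] with k hk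
        have : (0 : ℝ) < k := by exact_mod_cast hk
        simp only [mem_compl_iff, mem_singleton_iff]
        positivity
    refine (hlim.comp hx).congr fun k => ?_
    simp only [Function.comp_apply, inv_inv, zero_add, smul_eq_mul, neg_zero, zero_mul,
      Real.exp_zero, sub_self, sub_zero]
    rw [Real.div_rpow ht.le (by positivity)]
    congr 3
    ring
  have hmul : Filter.Tendsto (fun k : ℕ => (k : ℝ) *
      (-(1 - Real.exp (-(t / k) ^ (1 / β) * r)) ^ β)) Filter.atTop (nhds (-t * r ^ β)) := by
    have h := (hder.rpow_const (Or.inr hβ0.le : t ^ (1 / β) * r ≠ 0 ∨ 0 ≤ β)).neg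
    rw [Real.mul_rpow (by positivity) hr, ← Real.rpow_mul ht.le, one_div_mul_cancel hβ0.ne',
      Real.rpow_one, ← neg_mul] at h
    refine h.congr fun k => ?_
    have hnn : 0 ≤ 1 - Real.exp (-(t / k) ^ (1 / β) * r) := by
      rw [sub_nonneg, Real.exp_le_one_iff, neg_mul, neg_nonpos]
      positivity
    rw [Real.mul_rpow (by positivity) hnn, ← Real.rpow_mul (by positivity),
      one_div_mul_cancel hβ0.ne', Real.rpow_one, mul_neg]
  simpa [sub_eq_add_neg] using Real.tendsto_one_add_pow_exp_of_tendsto hmul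

open Polynomial in
theorem coeff_pow_nonneg {P : ℝ[X]} (hP : ∀ j, 0 ≤ P.coeff j) (k j : ℕ) :
    0 ≤ (P ^ k).coeff j := by
  induction k generalizing j with
  | zero => rw [pow_zero, coeff_one]; split_ifs <;> simp
  | succ k ih =>
    rw [pow_succ, coeff_mul]
    exact Finset.sum_nonneg fun x _ => mul_nonneg (ih _) (hP _)

open Polynomial in
theorem eval_nonneg_of_coeff_nonneg {P : ℝ[X]} (hP : ∀ j, 0 ≤ P.coeff j) {z : ℝ} (hz : 0 ≤ z) :
    0 ≤ P.eval z := by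
  rw [eval_eq_sum_range]
  exact Finset.sum_nonneg fun j _ => mul_nonneg (hP j) (pow_nonneg hz j)

open Polynomial in
theorem eval_le_eval_one_of_coeff_nonneg {P : ℝ[X]} (hP : ∀ j, 0 ≤ P.coeff j) {z : ℝ}
    (hz0 : 0 ≤ z) (hz1 : z ≤ 1) : P.eval z ≤ P.eval 1 := by
  rw [eval_eq_sum_range, eval_eq_sum_range]
  gcongr with j
  exact hP j

/-- The fractional heat kernels are bounded in `L¹` uniformly in time: `exp (-t‖ξ‖^{2α})` is a
limit of mixtures of the Schwartz functions `exp (-s‖ξ‖^{4M})` with `α < 2M`. -/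
theorem exists_lintegral_enorm_fourierInv_exp_neg_rpow_le (n : ℕ) (hn : 1 ≤ n) {α : ℝ}
    (hα : 0 < α) :
    ∃ K : ℝ≥0∞, K < ⊤ ∧ ∀ t > (0 : ℝ),
      ∫⁻ x, ‖𝓕⁻ (fun ξ : Rn n => (Real.exp (-t * ‖ξ‖ ^ (2 * α)) : ℂ)) x‖ₑ ≤ K := by
  obtain ⟨M, hM⟩ := exists_nat_gt α
  have hMpos : (0 : ℝ) < M := hα.trans hM
  have hM1 : 1 ≤ M := by exact_mod_cast hMpos
  obtain ⟨K, hKtop, hK⟩ := exists_fourierInv_exp_neg_norm_pow_le n M hM1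
  refine ⟨K, hKtop, fun t ht => ?_⟩
  set N := 4 * M with hNdef
  have hN : 0 < N := by lia
  set β : ℝ := α / (2 * M) with hβ
  have hβ0 : 0 < β := by positivity
  have hβ1 : β ≤ 1 := by rw [hβ, div_le_one (by positivity)]; linarith
  have hpow : ∀ ξ : Rn n, (‖ξ‖ ^ N) ^ β = ‖ξ‖ ^ (2 * α) := fun ξ => by
    rw [← Real.rpow_natCast, ← Real.rpow_mul (norm_nonneg ξ), hβ, hNdef]
    congr 1
    push_cast
    field_simp
    ring
  have : Nonempty (Fin n) := ⟨⟨0, hn⟩⟩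
  have hne : ∀ᵐ ξ : Rn n, ξ ≠ 0 := Measure.ae_ne volume 0
  obtain ⟨P, hP, hP1, hPlim⟩ := exists_polynomial_tendsto_one_sub_rpow hβ0 hβ1
  have hexp01 : ∀ h : ℝ, 0 ≤ h → ∀ ξ : Rn n, Real.exp (-h * ‖ξ‖ ^ N) ≤ 1 := fun h hh ξ => by
    rw [Real.exp_le_one_iff, neg_mul, neg_nonpos]; positivity
  have hintN : ∀ δ > (0 : ℝ), Integrable (fun ξ : Rn n => Real.exp (-δ * ‖ξ‖ ^ N)) :=
    fun δ hδ => by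
      have := integrable_exp_neg_mul_norm_rpow n (s := δ) (a := N) hδ (by positivity)
      simpa only [Real.rpow_natCast] using this
  have hmix : ∀ δ > (0 : ℝ), ∀ k : ℕ,
      ∫⁻ x, ‖𝓕⁻ (fun ξ : Rn n => ((Real.exp (-δ * ‖ξ‖ ^ N) *
        (1 - (1 - Real.exp (-(t / k) ^ (1 / β) * ‖ξ‖ ^ N)) ^ β) ^ k : ℝ) : ℂ)) x‖ₑ ≤ K := by
    intro δ hδ k
    rcases Nat.eq_zero_or_pos k with rfl | hk
    · simpa using hK δ hδ
    have hkR : (0 : ℝ) < k := by exact_mod_cast hk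
    have hh : 0 < (t / k) ^ (1 / β) := by positivity
    refine lintegral_enorm_fourierInv_le_of_tendsto
      (m := fun i ξ => Real.exp (-δ * ‖ξ‖ ^ N) *
        ((P i) ^ k).eval (Real.exp (-(t / k) ^ (1 / β) * ‖ξ‖ ^ N)))
      (fun i => by fun_prop) (hintN δ hδ) (fun i ξ => ?_) ?_ (fun i =>
        lintegral_enorm_fourierInv_polynomial_le hN hK (coeff_pow_nonneg (hP i) k) ?_ hδ hh.le)
    · have h0 := eval_nonneg_of_coeff_nonneg (hP i)
        (Real.exp_pos (-(t / k) ^ (1 / β) * ‖ξ‖ ^ N)).le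
      have h1 := (eval_le_eval_one_of_coeff_nonneg (hP i)
        (Real.exp_pos (-(t / k) ^ (1 / β) * ‖ξ‖ ^ N)).le (hexp01 _ hh.le ξ)).trans (hP1 i)
      rw [Polynomial.eval_pow, abs_of_nonneg (by positivity)]
      exact mul_le_of_le_one_right (Real.exp_pos _).le (pow_le_one₀ h0 h1)
    · filter_upwards [hne] with ξ hξ
      have hξ' : 0 < ‖ξ‖ := norm_pos_iff.2 hξ
      simp only [Polynomial.eval_pow]
      refine ((hPlim _ ⟨(Real.exp_pos _).le, ?_⟩).pow k).const_mul _
      rw [Real.exp_lt_one_iff, neg_mul, neg_lt_zero]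
      positivity
    · rw [Polynomial.eval_pow]
      exact pow_le_one₀ (eval_nonneg_of_coeff_nonneg (hP i) zero_le_one) (hP1 i)
  have hbase : ∀ (k : ℕ) (ξ : Rn n),
      0 ≤ 1 - Real.exp (-(t / k) ^ (1 / β) * ‖ξ‖ ^ N) := fun k ξ =>
    sub_nonneg.2 (hexp01 _ (by positivity) ξ)
  have hdamp : ∀ δ > (0 : ℝ),
      ∫⁻ x, ‖𝓕⁻ (fun ξ : Rn n => ((Real.exp (-δ * ‖ξ‖ ^ N) *
        Real.exp (-t * ‖ξ‖ ^ (2 * α)) : ℝ) : ℂ)) x‖ₑ ≤ K := by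
    intro δ hδ
    refine lintegral_enorm_fourierInv_le_of_tendsto (fun k => ?_) (hintN δ hδ) (fun k ξ => ?_)
      (.of_forall fun ξ => ?_) (hmix δ hδ)
    · have : Continuous fun ξ : Rn n =>
          (1 - Real.exp (-(t / k) ^ (1 / β) * ‖ξ‖ ^ N)) ^ β :=
        Continuous.rpow_const (by fun_prop) fun _ => Or.inr hβ0.le
      fun_prop
    · have h0 : 0 ≤ (1 - Real.exp (-(t / k) ^ (1 / β) * ‖ξ‖ ^ N)) ^ β :=
        Real.rpow_nonneg (hbase k ξ) _
      have h1 : (1 - Real.exp (-(t / k) ^ (1 / β) * ‖ξ‖ ^ N)) ^ β ≤ 1 :=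
        Real.rpow_le_one (hbase k ξ) (by linarith [Real.exp_pos (-(t / k) ^ (1 / β) * ‖ξ‖ ^ N)])
          hβ0.le
      have h2 : 0 ≤ 1 - (1 - Real.exp (-(t / k) ^ (1 / β) * ‖ξ‖ ^ N)) ^ β := by linarith
      rw [abs_of_nonneg (by positivity)]
      exact mul_le_of_le_one_right (Real.exp_pos _).le (pow_le_one₀ h2 (by linarith))
    · rw [← hpow ξ]
      exact (tendsto_one_sub_rpow_pow hβ0 ht (by positivity)).const_mul _
  refine lintegral_enorm_fourierInv_le_of_tendsto
    (m := fun k ξ => Real.exp (-(1 / ((k : ℝ) + 1)) * ‖ξ‖ ^ N) * Real.exp (-t * ‖ξ‖ ^ (2 * α)))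
    (fun k => ?_) (integrable_exp_neg_mul_norm_rpow n ht (by positivity : 0 < 2 * α))
    (fun k ξ => ?_) (.of_forall fun ξ => ?_) (fun k => hdamp _ (by positivity))
  · have := continuous_exp_neg_mul_norm_rpow n t (by positivity : 0 < 2 * α)
    fun_prop
  · rw [abs_of_nonneg (by positivity)]
    exact mul_le_of_le_one_left (Real.exp_pos _).le (hexp01 _ (by positivity) ξ)
  · have h := ((tendsto_one_div_add_atTop_nhds_zero_nat (𝕜 := ℝ)).neg.mul_const
      (‖ξ‖ ^ N)).rexp.mul_const (Real.exp (-t * ‖ξ‖ ^ (2 * α)))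
    simpa using h

theorem continuous_gKer (n : ℕ) {α t : ℝ} (hα : 0 < α) (ht : 0 < t) :
    Continuous (gKer n α t) :=
  Complex.continuous_re.comp (continuous_fourierInv_of_integrable
    (integrable_exp_neg_mul_norm_rpow n ht (by positivity : 0 < 2 * α)).ofReal)

theorem exists_lintegral_enorm_gKer_le (n : ℕ) (hn : 1 ≤ n) {α : ℝ} (hα : 0 < α) :
    ∃ K : ℝ≥0∞, K < ⊤ ∧ ∀ t > (0 : ℝ), ∫⁻ x, ‖gKer n α t x‖ₑ ≤ K := by
  obtain ⟨K, hK, h⟩ := exists_lintegral_enorm_fourierInv_exp_neg_rpow_le n hn hα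
  refine ⟨K, hK, fun t ht => (lintegral_mono fun x => ?_).trans (h t ht)⟩
  rw [← ofReal_norm, ← ofReal_norm]
  exact ENNReal.ofReal_le_ofReal (Complex.abs_re_le_norm _)

/-- Hölder's inequality with respect to a weight. -/
theorem lintegral_mul_rpow_le {X : Type*} [MeasurableSpace X] {μ : Measure X} {q : ℝ}
    (hq : 1 < q) {g f : X → ℝ≥0∞} (hg : AEMeasurable g μ) (hf : AEMeasurable f μ) :
    (∫⁻ y, g y * f y ∂μ) ^ q ≤ (∫⁻ y, g y ∂μ) ^ (q - 1) * ∫⁻ y, g y * f y ^ q ∂μ := by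
  have hq0 : 0 < q := by linarith
  have hpq : (q / (q - 1)).HolderConjugate q := (Real.HolderConjugate.conjExponent hq).symm
  have h := ENNReal.lintegral_mul_le_Lp_mul_Lq μ hpq
    (hg.pow_const (1 / (q / (q - 1)))) ((hg.pow_const (1 / q)).mul hf)
  have h1 : ∀ y, ((fun y => g y ^ (1 / (q / (q - 1)))) * ((fun y => g y ^ (1 / q)) * f)) y
      = g y * f y := by
    intro y
    simp only [Pi.mul_apply]
    rw [← mul_assoc, ← ENNReal.rpow_add_of_nonneg _ _ (by have := hpq.pos; positivity)
      (by positivity), one_div, one_div, hpq.inv_add_inv_eq_one, ENNReal.rpow_one]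
  have h2 : ∀ y, (g y ^ (1 / (q / (q - 1)))) ^ (q / (q - 1)) = g y := fun y => by
    rw [← ENNReal.rpow_mul, one_div_mul_cancel hpq.ne_zero, ENNReal.rpow_one]
  have h3 : ∀ y, (((fun y => g y ^ (1 / q)) * f) y) ^ q = g y * f y ^ q := fun y => by
    rw [Pi.mul_apply, ENNReal.mul_rpow_of_nonneg _ _ hq0.le, ← ENNReal.rpow_mul,
      one_div_mul_cancel hq0.ne', ENNReal.rpow_one]
  simp_rw [h1, h2, h3] at h
  refine (ENNReal.rpow_le_rpow h hq0.le).trans (le_of_eq ?_)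
  rw [ENNReal.mul_rpow_of_nonneg _ _ hq0.le, ← ENNReal.rpow_mul, ← ENNReal.rpow_mul,
    one_div_mul_cancel hq0.ne', ENNReal.rpow_one]
  congr 2
  have : q - 1 ≠ 0 := by linarith
  field_simp

/-- Young's inequality `‖g ∗ f‖_q ≤ ‖g‖₁ ‖f‖_q`. -/
theorem eLpNorm_conv_le (n : ℕ) {q : ℝ} (hq : 1 < q) {g f : Rn n → ℝ} (hg : Measurable g)
    (hf : Measurable f) :
    eLpNorm (conv n g f) (ENNReal.ofReal q) volume
      ≤ (∫⁻ x, ‖g x‖ₑ) * eLpNorm f (ENNReal.ofReal q) volume := by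
  have hq0 : 0 < q := by linarith
  have hne : ENNReal.ofReal q ≠ 0 := by simpa using hq0
  set G := ∫⁻ x, ‖g x‖ₑ
  have key : ∫⁻ x, ‖conv n g f x‖ₑ ^ q ≤ G ^ q * ∫⁻ y, ‖f y‖ₑ ^ q := by
    calc ∫⁻ x, ‖conv n g f x‖ₑ ^ q
        ≤ ∫⁻ x, G ^ (q - 1) * ∫⁻ y, ‖g (x - y)‖ₑ * ‖f y‖ₑ ^ q := by
          refine lintegral_mono fun x => ?_
          have h1 : ‖conv n g f x‖ₑ ≤ ∫⁻ y, ‖g (x - y)‖ₑ * ‖f y‖ₑ :=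
            (enorm_integral_le_lintegral_enorm _).trans
              (lintegral_mono fun y => (enorm_mul _ _).le)
          refine (ENNReal.rpow_le_rpow h1 hq0.le).trans ((lintegral_mul_rpow_le hq
            (by fun_prop) (by fun_prop)).trans_eq ?_)
          rw [lintegral_sub_left_eq_self (fun y => ‖g y‖ₑ) x]
      _ = G ^ (q - 1) * ∫⁻ x, ∫⁻ y, ‖g (x - y)‖ₑ * ‖f y‖ₑ ^ q := by
          rw [lintegral_const_mul]
          exact Measurable.lintegral_prod_right (by fun_prop)
      _ = G ^ (q - 1) * ∫⁻ y, ∫⁻ x, ‖g (x - y)‖ₑ * ‖f y‖ₑ ^ q := by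
          rw [lintegral_lintegral_swap (by fun_prop)]
      _ = G ^ (q - 1) * ∫⁻ y, G * ‖f y‖ₑ ^ q := by
          congr 2
          ext y
          rw [lintegral_mul_const _ (by fun_prop),
            lintegral_sub_right_eq_self (fun x => ‖g x‖ₑ) y]
      _ = G ^ q * ∫⁻ y, ‖f y‖ₑ ^ q := by
          rw [lintegral_const_mul _ (by fun_prop), ← mul_assoc]
          congr 1
          nth_rw 2 [← ENNReal.rpow_one G]
          rw [← ENNReal.rpow_add_of_nonneg _ _ (by linarith) zero_le_one, sub_add_cancel]
  rw [eLpNorm_eq_lintegral_rpow_enorm_toReal hne ENNReal.ofReal_ne_top,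
    eLpNorm_eq_lintegral_rpow_enorm_toReal hne ENNReal.ofReal_ne_top,
    ENNReal.toReal_ofReal hq0.le]
  refine (ENNReal.rpow_le_rpow key (by positivity)).trans_eq ?_
  rw [ENNReal.mul_rpow_of_nonneg _ _ (by positivity), ← ENNReal.rpow_mul,
    mul_one_div_cancel hq0.ne', ENNReal.rpow_one]

theorem one_le_exp_mul_one_add_rpow {q p M C r a : ℝ} (hq : 0 < q) (hqp : q ≤ p) (hpM : p ≤ M)
    (hC : 0 ≤ C) (hr : 0 ≤ r) (ha : 0 ≤ a)
    (hlog : 1 / q - 1 / p ≤ C / Real.log (Real.exp 1 + r)) :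
    1 ≤ Real.exp (a * q * M * C) * ((1 + r) ^ (-a)) ^ (p - q) := by
  have hp : 0 < p := hq.trans_le hqp
  have he : 1 ≤ Real.exp 1 := Real.one_le_exp zero_le_one
  have hL : 0 < Real.log (Real.exp 1 + r) := by
    apply Real.log_pos
    linarith [Real.add_one_lt_exp one_ne_zero]
  have hle : Real.log (1 + r) ≤ Real.log (Real.exp 1 + r) :=
    Real.log_le_log (by linarith) (by linarith)
  rw [le_div_iff₀ hL] at hlog
  have h1 : (p - q) * Real.log (Real.exp 1 + r) ≤ q * M * C := by
    have : p - q = q * p * (1 / q - 1 / p) := by field_simp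
    rw [this, mul_assoc]
    calc q * p * ((1 / q - 1 / p) * Real.log (Real.exp 1 + r)) ≤ q * p * C := by gcongr
      _ ≤ q * M * C := by gcongr
  have h2 : (p - q) * Real.log (1 + r) ≤ q * M * C :=
    (mul_le_mul_of_nonneg_left hle (by linarith)).trans h1
  rw [← Real.rpow_mul (by linarith), Real.rpow_def_of_pos (by linarith), ← Real.exp_add]
  apply Real.one_le_exp
  nlinarith [mul_le_mul_of_nonneg_left h2 ha]

theorem rpow_le_rpow_add_mul_rpow {v w B : ℝ≥0∞} {q p : ℝ} (hq : 0 < q) (hqp : q ≤ p)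
    (hB : 1 ≤ B * w ^ (p - q)) : v ^ q ≤ w ^ q + B * v ^ p := by
  rcases le_total v w with h | h
  · exact (ENNReal.rpow_le_rpow h hq.le).trans le_self_add
  · refine le_add_left ?_
    calc v ^ q = 1 * v ^ q := (one_mul _).symm
      _ ≤ B * w ^ (p - q) * v ^ q := by gcongr
      _ ≤ B * v ^ (p - q) * v ^ q := by
          gcongr
      _ = B * v ^ p := by
          rw [mul_assoc, ← ENNReal.rpow_add_of_nonneg _ _ (by linarith) hq.le, sub_add_cancel]

theorem IsPembq.exists_log_decay {n : ℕ} (hn : 1 ≤ n) {q : ℝ} (hq : 1 < q) {qb : Rn n → ℝ}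
    (h : IsPembq n q qb) :
    ∃ C > (0 : ℝ), ∀ x, 1 / q - 1 / qb x ≤ C / Real.log (Real.exp 1 + ‖x‖) := by
  obtain ⟨⟨-, h1, C₁, -, C₂, hC₂, pinf, -, hdecay⟩, -, -, hs⟩ := h
  have : Nonempty (Fin n) := ⟨⟨0, hn⟩⟩
  have hlim1 : Filter.Tendsto (fun x => 1 / qb x) (Filter.cocompact (Rn n))
      (nhds (1 / q)) := by
    have h0 := (hs.inv_tendsto_atTop).const_sub (1 / q)
    rw [sub_zero] at h0
    refine h0.congr' ?_
    filter_upwards [hs.eventually_gt_atTop 0] with x hx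
    have hqb : qb x ≠ 0 := by linarith [h1 x (mem_univ x)]
    have hne : qb x - q ≠ 0 := by
      intro h
      rw [h, div_zero] at hx
      exact lt_irrefl _ hx
    rw [Pi.inv_apply, inv_div]
    field_simp
    ring
  have hlim2 : Filter.Tendsto (fun x => 1 / qb x) (Filter.cocompact (Rn n))
      (nhds (1 / pinf)) := by
    rw [tendsto_iff_norm_sub_tendsto_zero]
    refine squeeze_zero (fun _ => norm_nonneg _) (fun x => hdecay x (mem_univ x)) ?_
    exact (Real.tendsto_log_atTop.comp (Filter.tendsto_atTop_add_const_left _ _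
      (tendsto_norm_cocompact_atTop (E := Rn n)))).const_div_atTop C₂
  have heq := tendsto_nhds_unique hlim1 hlim2
  refine ⟨C₂, hC₂, fun x => ?_⟩
  rw [heq]
  have := hdecay x (mem_univ x)
  rw [abs_sub_comm] at this
  exact (le_abs_self _).trans this

/-- The embedding `L^{q̄(·)} ⊂ L^q`. -/
theorem IsPembq.exists_eLpNorm_le {n : ℕ} (hn : 1 ≤ n) {q : ℝ} (hq : 1 < q) {qb : Rn n → ℝ}
    (h : IsPembq n q qb) :
    ∃ K : ℝ≥0∞, K < ⊤ ∧ ∀ f : Rn n → ℝ, ∀ lam : ℝ≥0∞, 0 < lam → lam ≠ ⊤ →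
      ∫⁻ x, (ENNReal.ofReal |f x| / lam) ^ qb x ≤ 1 →
      eLpNorm f (ENNReal.ofReal q) volume ≤ K * lam := by
  have hq0 : 0 < q := by linarith
  obtain ⟨C, hC, hlog⟩ := h.exists_log_decay hn hq
  obtain ⟨⟨hmeas, h1, -⟩, hinf, ⟨M, hM⟩, -⟩ := h
  have hqle : ∀ᵐ x, q ≤ qb x := by
    have hbdd : Filter.IsBoundedUnder (· ≥ ·) (ae (volume : Measure (Rn n))) qb :=
      ⟨1, Filter.eventually_map.2 (.of_forall fun x => h1 x (mem_univ x))⟩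
    filter_upwards [ae_essInf_le hbdd] with x hx using hinf.trans hx
  set a : ℝ := ((n : ℝ) + 1) / q with ha
  have ha0 : 0 ≤ a := by positivity
  set w : Rn n → ℝ≥0∞ := fun x => ENNReal.ofReal ((1 + ‖x‖) ^ (-a)) with hw
  set B : ℝ≥0∞ := ENNReal.ofReal (Real.exp (a * q * M * C)) with hB
  have hwq : ∫⁻ x, w x ^ q < ⊤ := by
    have hfin : ∫⁻ x : Rn n, ENNReal.ofReal ((1 + ‖x‖) ^ (-((n : ℝ) + 1))) < ⊤ :=
      finite_integral_one_add_norm (by simp)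
    refine lt_of_eq_of_lt (lintegral_congr fun x => ?_) hfin
    rw [hw, ENNReal.ofReal_rpow_of_nonneg (by positivity) hq0.le, ← Real.rpow_mul (by positivity),
      ha, neg_mul, div_mul_cancel₀ _ hq0.ne']
  refine ⟨((∫⁻ x, w x ^ q) + B) ^ (1 / q), ?_, fun f lam hlam0 hlamtop hmod => ?_⟩
  · exact ENNReal.rpow_lt_top_of_nonneg (by positivity)
      (ENNReal.add_lt_top.2 ⟨hwq, ENNReal.ofReal_lt_top⟩).ne
  set v : Rn n → ℝ≥0∞ := fun x => ENNReal.ofReal |f x| / lam with hv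
  have hvq : ∫⁻ x, v x ^ q ≤ (∫⁻ x, w x ^ q) + B := by
    calc ∫⁻ x, v x ^ q ≤ ∫⁻ x, (w x ^ q + B * v x ^ qb x) := by
          refine lintegral_mono_ae ?_
          filter_upwards [hqle, hM] with x hx hxM
          refine rpow_le_rpow_add_mul_rpow hq0 hx ?_
          rw [hB, hw, ENNReal.ofReal_rpow_of_nonneg (by positivity) (by linarith),
            ← ENNReal.ofReal_mul (Real.exp_pos _).le, ENNReal.one_le_ofReal]
          exact one_le_exp_mul_one_add_rpow hq0 hx hxM hC.le (norm_nonneg x) ha0 (hlog x)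
      _ = (∫⁻ x, w x ^ q) + B * ∫⁻ x, v x ^ qb x := by
          rw [lintegral_add_left (by fun_prop), lintegral_const_mul' _ _ ENNReal.ofReal_ne_top]
      _ ≤ (∫⁻ x, w x ^ q) + B := by
          gcongr
          exact mul_le_of_le_one_right' hmod
  have hfv : ∀ x, ‖f x‖ₑ ^ q = lam ^ q * v x ^ q := fun x => by
    rw [← ENNReal.mul_rpow_of_nonneg _ _ hq0.le, hv, ENNReal.mul_div_cancel hlam0.ne' hlamtop,
      ← Real.norm_eq_abs, ofReal_norm]
  rw [eLpNorm_eq_lintegral_rpow_enorm_toReal (by simpa using hq0) ENNReal.ofReal_ne_top,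
    ENNReal.toReal_ofReal hq0.le]
  simp_rw [hfv]
  rw [lintegral_const_mul' _ _ (ENNReal.rpow_ne_top_of_nonneg hq0.le hlamtop),
    ENNReal.mul_rpow_of_nonneg _ _ (by positivity), ← ENNReal.rpow_mul, mul_one_div_cancel hq0.ne',
    ENNReal.rpow_one, mul_comm]
  gcongr

theorem le_max_rpow_rpow {T a b p : ℝ} (hT : 0 < T) (ha : 0 < a) (hap : a ≤ p) (hpb : p ≤ b) :
    T ≤ max (T ^ (1 / a)) (T ^ (1 / b)) ^ p := by
  have hp : 0 < p := ha.trans_le hap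
  have hb : 0 < b := hp.trans_le hpb
  rcases le_total 1 T with h | h
  · calc T = T ^ (1 : ℝ) := (Real.rpow_one T).symm
      _ ≤ T ^ (1 / a * p) := Real.rpow_le_rpow_of_exponent_le h (by
          rw [one_div_mul_eq_div, one_le_div ha]; exact hap)
      _ = (T ^ (1 / a)) ^ p := Real.rpow_mul hT.le _ _
      _ ≤ _ := Real.rpow_le_rpow (by positivity) (le_max_left _ _) hp.le
  · calc T = T ^ (1 : ℝ) := (Real.rpow_one T).symm
      _ ≤ T ^ (1 / b * p) := Real.rpow_le_rpow_of_exponent_ge hT h (by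
          rw [one_div_mul_eq_div, div_le_one hb]; exact hpb)
      _ = (T ^ (1 / b)) ^ p := Real.rpow_mul hT.le _ _
      _ ≤ _ := Real.rpow_le_rpow (by positivity) (le_max_right _ _) hp.le

theorem eNormT_le_of_forall_eLpNorm_le {n : ℕ} {p : ℝ → ℝ} {q T a b : ℝ} (hT : 0 < T)
    (ha : 0 < a) (hap : ∀ᵐ t ∂volume.restrict (Ioc 0 T), a ≤ p t)
    (hpb : ∀ᵐ t ∂volume.restrict (Ioc 0 T), p t ≤ b) {u : ℝ → Rn n → ℝ} {A : ℝ≥0∞} (hA0 : 0 < A)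
    (hu : ∀ t > 0, eLpNorm (u t) (ENNReal.ofReal q) volume ≤ A) :
    eNormT n p q T u ≤ ENNReal.ofReal (max (T ^ (1 / a)) (T ^ (1 / b))) * A := by
  set m := max (T ^ (1 / a)) (T ^ (1 / b)) with hm
  have hm0 : 0 < m := lt_max_of_lt_left (by positivity)
  refine sInf_le ⟨ENNReal.mul_pos (by simpa using hm0) hA0.ne', ?_⟩
  calc ∫⁻ t in Ioc (0 : ℝ) T,
        (eLpNorm (u t) (ENNReal.ofReal q) volume / (ENNReal.ofReal m * A)) ^ p t
      ≤ ∫⁻ _ in Ioc (0 : ℝ) T, ENNReal.ofReal T⁻¹ := by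
        refine lintegral_mono_ae ?_
        filter_upwards [hap, hpb, ae_restrict_mem measurableSet_Ioc] with t h1 h2 ht
        have hp : 0 < p t := ha.trans_le h1
        have hdiv : eLpNorm (u t) (ENNReal.ofReal q) volume / (ENNReal.ofReal m * A)
            ≤ ENNReal.ofReal m⁻¹ := by
          refine ENNReal.div_le_of_le_mul ?_
          rw [← mul_assoc, ← ENNReal.ofReal_mul (by positivity), inv_mul_cancel₀ hm0.ne',
            ENNReal.ofReal_one, one_mul]
          exact hu t ht.1
        refine (ENNReal.rpow_le_rpow hdiv hp.le).trans ?_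
        rw [ENNReal.ofReal_rpow_of_nonneg (by positivity) hp.le, Real.inv_rpow hm0.le]
        exact ENNReal.ofReal_le_ofReal (inv_anti₀ hT (le_max_rpow_rpow hT ha h1 h2))
    _ ≤ 1 := by
        rw [setLIntegral_const, Real.volume_Ioc, sub_zero, ← ENNReal.ofReal_mul (by positivity),
          inv_mul_cancel₀ hT.ne', ENNReal.ofReal_one]

/-- Control of the heat semigroup on the initial data in `E_T`:
`‖𝔤_t^α ∗ u₀‖_{E_T} ≤ C max{T^{1/p⁻}, T^{1/p⁺}} ‖u₀‖_{L^{q̄(·)}}`. -/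
theorem stmt10 (n : ℕ) (hn : 1 ≤ n) (α : ℝ) (hα : 0 < α)
    (q : ℝ) (hq : 1 < q) (qb : Rn n → ℝ) (hqb : IsPembq n q qb)
    (p : ℝ → ℝ) (hpm : Measurable p) (hp1 : ∀ t ∈ Ici (0:ℝ), 1 ≤ p t)
    (hpminus : 1 < essInf p (volume.restrict (Ici (0:ℝ))))
    (hpplus : ∃ M : ℝ, ∀ᵐ t ∂(volume.restrict (Ici (0:ℝ))), p t ≤ M) :
    ∃ C > (0:ℝ), ∀ T > (0:ℝ), ∀ u₀ : Rn n → ℝ, Measurable u₀ →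
      luxNormR volume qb u₀ < ⊤ →
      eNormT n p q T (fun t x => conv n (gKer n α t) u₀ x)
        ≤ ENNReal.ofReal (C * max (T ^ (1 / essInf p (volume.restrict (Ici (0:ℝ)))))
            (T ^ (1 / essSup p (volume.restrict (Ici (0:ℝ))))))
          * luxNormR volume qb u₀ := by
  obtain ⟨K₁, hK₁, hker⟩ := exists_lintegral_enorm_gKer_le n hn hα
  obtain ⟨K₂, hK₂, hemb⟩ := hqb.exists_eLpNorm_le hn hq
  set C : ℝ := (K₁ * K₂).toReal + 1 with hC
  have hC0 : 0 < C := by positivity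
  have hKC : K₁ * K₂ ≤ ENNReal.ofReal C := by
    rw [← ENNReal.ofReal_toReal (ENNReal.mul_lt_top hK₁ hK₂).ne]
    exact ENNReal.ofReal_le_ofReal (by rw [hC]; linarith)
  have hinf : ∀ᵐ t ∂volume.restrict (Ici (0:ℝ)), essInf p (volume.restrict (Ici (0:ℝ))) ≤ p t :=
    ae_essInf_le ⟨1, Filter.eventually_map.2
      ((ae_restrict_mem measurableSet_Ici).mono fun t ht => hp1 t ht)⟩
  have hsup : ∀ᵐ t ∂volume.restrict (Ici (0:ℝ)), p t ≤ essSup p (volume.restrict (Ici (0:ℝ))) := by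
    obtain ⟨M, hM⟩ := hpplus
    exact ae_le_essSup ⟨M, Filter.eventually_map.2 hM⟩
  refine ⟨C, hC0, fun T hT u₀ hu₀ _ => ?_⟩
  have hsub : Ioc 0 T ⊆ Ici (0:ℝ) := fun t ht => ht.1.le
  set m := max (T ^ (1 / essInf p (volume.restrict (Ici (0:ℝ)))))
    (T ^ (1 / essSup p (volume.restrict (Ici (0:ℝ))))) with hm
  have hm0 : 0 < m := lt_max_of_lt_left (by positivity)
  have hCm : ENNReal.ofReal (C * m) ≠ 0 := by
    simpa using mul_pos hC0 hm0
  rw [← ENNReal.div_le_iff' hCm ENNReal.ofReal_ne_top]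
  refine le_sInf fun lam hlam => ?_
  rw [ENNReal.div_le_iff' hCm ENNReal.ofReal_ne_top]
  rcases eq_or_ne lam ⊤ with rfl | hlamtop
  · rw [ENNReal.mul_top hCm]
    exact le_top
  rw [mul_comm C, ENNReal.ofReal_mul hm0.le, mul_assoc]
  refine eNormT_le_of_forall_eLpNorm_le hT (zero_lt_one.trans hpminus)
    (ae_restrict_of_ae_restrict_of_subset hsub hinf)
    (ae_restrict_of_ae_restrict_of_subset hsub hsup)
    (ENNReal.mul_pos (by simpa using hC0) hlam.1.ne') fun t ht => ?_
  calc eLpNorm (conv n (gKer n α t) u₀) (ENNReal.ofReal q) volume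
      ≤ (∫⁻ x, ‖gKer n α t x‖ₑ) * eLpNorm u₀ (ENNReal.ofReal q) volume :=
        eLpNorm_conv_le n hq (continuous_gKer n hα ht).measurable hu₀
    _ ≤ K₁ * (K₂ * lam) := by
        gcongr
        · exact hker t ht
        · exact hemb u₀ lam hlam.1 hlamtop hlam.2
    _ ≤ ENNReal.ofReal C * lam := by
        rw [← mul_assoc]
        gcongr
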